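/- On four qubits, no list of fewer than nine CNOT gates has composition equal to the cyclic-shift permutation gate x ↦ x ∘ c, where c : Fin 4 → Fin 4 is the 4-cycle sending j to j+1 (mod 4); together with the existence of a nine-gate circuit, the minimal CNOT cost C(4) equals 9. -/

import Mathlib

/-- The CNOT gate with control `a` and target `b` acting on computational
basis states of an `n`-qubit system. -/
def CNOT {n : ℕ} (a b : Fin n) (x : Fin n → Bool) : Fin n → Bool :=
  fun j => if j = b then xor (x a) (x b) else x j

/-- The composition of a list of CNOT gates, applied in order. -/
def circuit {n : ℕ} (L : List (Fin n × Fin n)) (x : Fin n → Bool) : Fin n → Bool :=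
  L.foldl (fun y g => CNOT g.1 g.2 y) x

/-!
The lower bound is a meet-in-the-middle search. A circuit of at most eight gates splits into two
halves of at most four; since each gate is its own inverse, undoing the second half after the cyclic
shift gives the same map as the first half. So it suffices that no map is reachable by at most four
gates both from the identity and from the shift. The search keeps only the values of a map on the
weight-one basis states, packed into one number on which a gate acts by shifts and `xor`. For the
upper bound, a cycle through `k` qubits is a product of `k - 1` swaps of three gates each.
-/

section Circuit

variable {n : ℕ}

theorem CNOT_involutive {a b : Fin n} (hab : a ≠ b) : Function.Involutive (CNOT a b) := by
  intro x
  funext j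
  by_cases hj : j = b <;> simp [CNOT, hj, hab]

theorem circuit_cons (g : Fin n × Fin n) (L : List (Fin n × Fin n)) (x : Fin n → Bool) :
    circuit (g :: L) x = circuit L (CNOT g.1 g.2 x) := rfl

theorem circuit_append (L M : List (Fin n × Fin n)) (x : Fin n → Bool) :
    circuit (L ++ M) x = circuit M (circuit L x) :=
  List.foldl_append

theorem leftInverse_circuit_reverse {L : List (Fin n × Fin n)} (hL : ∀ g ∈ L, g.1 ≠ g.2) :
    Function.LeftInverse (circuit L.reverse) (circuit L) := by
  induction L with
  | nil => exact fun _ => rfl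
  | cons g L ih =>
    obtain ⟨hg, hL⟩ := List.forall_mem_cons.1 hL
    intro x
    rw [List.reverse_cons, circuit_append, circuit_cons g L, ih hL]
    exact CNOT_involutive hg x

end Circuit

section UpperBound

variable {n : ℕ}

/-- The three CNOT gates whose composition exchanges the qubits `a` and `b`. -/
def swapGates (a b : Fin n) : List (Fin n × Fin n) :=
  [(a, b), (b, a), (a, b)]

theorem circuit_swapGates {a b : Fin n} (hab : a ≠ b) (x : Fin n → Bool) :
    circuit (swapGates a b) x = x ∘ Equiv.swap a b := by
  funext j
  rcases eq_or_ne j a with rfl | hja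
  · cases hxj : x j <;> simp [circuit, swapGates, CNOT, hab, hxj]
  rcases eq_or_ne j b with rfl | hjb
  · simp [circuit, swapGates, CNOT, hab, hab.symm]
  · simp [circuit, swapGates, CNOT, hja, hjb, Equiv.swap_apply_of_ne_of_ne]

/-- The circuit of adjacent swaps along a list of qubits, factoring `List.formPerm`. -/
def formPermGates : List (Fin n) → List (Fin n × Fin n)
  | a :: b :: l => swapGates a b ++ formPermGates (b :: l)
  | _ => []

theorem circuit_formPermGates : ∀ {l : List (Fin n)}, l.Nodup → ∀ x : Fin n → Bool,
    circuit (formPermGates l) x = x ∘ l.formPerm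
  | [], _, _ => rfl
  | [_], _, _ => rfl
  | a :: b :: l, hl, x => by
    have hab : a ≠ b := List.ne_of_not_mem_cons (List.nodup_cons.1 hl).1
    rw [formPermGates, circuit_append, circuit_swapGates hab, circuit_formPermGates hl.of_cons,
      List.formPerm_cons_cons, Equiv.Perm.coe_mul, Function.comp_assoc]

end UpperBound

section Code

variable {n : ℕ}

/-- The matrix of a linear map of basis states, packed into a number: bit `n * j + i` is
coordinate `j` of the value at the `i`-th weight-one state. -/
def code (f : (Fin n → Bool) → Fin n → Bool) : ℕ :=
  Nat.ofBits fun k : Fin (n * n) => f (fun i => i = k.modNat) k.divNat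

/-- The action of `CNOT a b` on codes: row `a`, the block of `n` bits from `n * a` on, is added
to row `b`. -/
def gateCode (n a b m : ℕ) : ℕ :=
  m ^^^ ((m >>> (n * a) % 2 ^ n) <<< (n * b))

theorem testBit_code (f : (Fin n → Bool) → Fin n → Bool) (i j : Fin n) :
    (code f).testBit (n * j + i) = f (fun i' => i' = i) j := by
  have hlt : n * j + i < n * n := by nlinarith [i.isLt, j.isLt]
  have hmod : Fin.modNat ⟨n * j + i, hlt⟩ = i := by
    ext; simp [Nat.mod_eq_of_lt i.isLt]
  have hdiv : Fin.divNat ⟨n * j + i, hlt⟩ = j := by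
    ext; simp [Nat.mul_add_div i.pos, Nat.div_eq_of_lt i.isLt]
  rw [code, Nat.testBit_ofBits_lt _ _ hlt, hmod, hdiv]

theorem testBit_code_of_le (f : (Fin n → Bool) → Fin n → Bool) {k : ℕ} (hk : n * n ≤ k) :
    (code f).testBit k = false :=
  Nat.testBit_ofBits_ge _ _ hk

theorem testBit_gateCode (a b m k : ℕ) :
    (gateCode n a b m).testBit k = (m.testBit k ^^
      (decide (n * b ≤ k ∧ k < n * b + n) && m.testBit (n * a + (k - n * b)))) := by
  by_cases hk : n * b ≤ k
  · have : k - n * b < n ↔ k < n * b + n := by omega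
    simp [gateCode, hk, this]
  · simp [gateCode, hk]

theorem code_CNOT_comp (a b : Fin n) (f : (Fin n → Bool) → Fin n → Bool) :
    code (CNOT a b ∘ f) = gateCode n a b (code f) := by
  refine Nat.eq_of_testBit_eq fun k => ?_
  rw [testBit_gateCode]
  rcases le_or_gt (n * n) k with hk | hk
  · have hb : ¬ (n * b ≤ k ∧ k < n * b + n) := by
      rintro ⟨-, hlt⟩
      nlinarith [b.isLt]
    simp [testBit_code_of_le _ hk, hb]
  obtain ⟨⟨j, i⟩, rfl⟩ : ∃ p : Fin n × Fin n, n * p.1 + p.2 = k :=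
    ⟨finProdFinEquiv.symm ⟨k, hk⟩, Nat.div_add_mod k n⟩
  have hrow : n * b ≤ n * j + i ∧ n * j + i < n * b + n ↔ j = b := by
    constructor
    · rintro ⟨hle, hlt⟩
      ext
      nlinarith [i.isLt]
    · rintro rfl
      omega
  rcases eq_or_ne j b with rfl | hj
  · simp [testBit_code, CNOT, Bool.xor_comm]
  · simp [testBit_code, CNOT, hrow, hj]

end Code

section Search

variable {n : ℕ}

/-- The control-target pairs of the CNOT gates on `n` qubits. -/
def gatePairs (n : ℕ) : List (Fin n × Fin n) :=
  (List.finRange n ×ˢ List.finRange n).filter fun g => g.1 ≠ g.2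

theorem mem_gatePairs {g : Fin n × Fin n} : g ∈ gatePairs n ↔ g.1 ≠ g.2 := by
  obtain ⟨a, b⟩ := g
  simp [gatePairs]

/-- The set of codes reachable from the code `m` by at most `k` gates on `n` qubits, as a bit set:
bit `c` records whether `c` is reachable. -/
def reachable (n : ℕ) : ℕ → ℕ → ℕ
  | 0, m => 2 ^ m
  | k + 1, m =>
    (gatePairs n).foldl (fun s g => s ||| reachable n k (gateCode n g.1 g.2 m)) (reachable n k m)

theorem testBit_foldl_or {α : Type*} (t : α → ℕ) (l : List α) (s c : ℕ) :
    (l.foldl (fun s g => s ||| t g) s).testBit c ↔ s.testBit c ∨ ∃ g ∈ l, (t g).testBit c := by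
  induction l generalizing s with
  | nil => simp
  | cons g l ih => simp [ih, or_assoc]

theorem testBit_reachable_circuit {k : ℕ} {L : List (Fin n × Fin n)} (hL : ∀ g ∈ L, g.1 ≠ g.2)
    (hk : L.length ≤ k) (f : (Fin n → Bool) → Fin n → Bool) :
    (reachable n k (code f)).testBit (code (circuit L ∘ f)) := by
  induction k generalizing L f with
  | zero =>
    obtain rfl : L = [] := List.length_eq_zero_iff.1 (Nat.le_zero.1 hk)
    exact Nat.testBit_two_pow_self
  | succ k ih =>
    refine (testBit_foldl_or _ _ _ _).2 ?_
    cases L with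
    | nil => exact Or.inl (ih hL (Nat.zero_le k) f)
    | cons g L =>
      obtain ⟨hg, hL⟩ := List.forall_mem_cons.1 hL
      refine Or.inr ⟨g, mem_gatePairs.2 hg, ?_⟩
      rw [← code_CNOT_comp]
      exact ih hL (Nat.le_of_succ_le_succ hk) (CNOT g.1 g.2 ∘ f)

theorem add_lt_length_of_reachable_disjoint {k l : ℕ} {L : List (Fin n × Fin n)}
    (hL : ∀ g ∈ L, g.1 ≠ g.2)
    (hdisj : reachable n k (code (n := n) id) &&& reachable n l (code (circuit L)) = 0) :
    k + l < L.length := by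
  by_contra! hlen
  have hdrop : ∀ g ∈ L.drop k, g.1 ≠ g.2 := fun g hg => hL g (List.mem_of_mem_drop hg)
  have hmeet : circuit (L.drop k).reverse ∘ circuit L = circuit (L.take k) := by
    funext x
    have hsplit : circuit L x = circuit (L.drop k) (circuit (L.take k) x) := by
      rw [← circuit_append, List.take_append_drop]
    rw [Function.comp_apply, hsplit, leftInverse_circuit_reverse hdrop]
  have hfwd : (reachable n k (code id)).testBit (code (circuit (L.take k))) :=
    testBit_reachable_circuit (fun g hg => hL g (List.mem_of_mem_take hg))
      (List.length_take_le k L) id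
  have hbwd : (reachable n l (code (circuit L))).testBit (code (circuit (L.take k))) := by
    rw [← hmeet]
    refine testBit_reachable_circuit (fun g hg => hdrop g (List.mem_reverse.1 hg)) ?_ _
    rw [List.length_reverse, List.length_drop]
    omega
  have hboth := congrArg (Nat.testBit · (code (circuit (L.take k)))) hdisj
  simp only [Nat.testBit_and, Nat.zero_testBit, hbwd, Bool.and_true] at hboth
  exact Bool.false_ne_true (hboth.symm.trans hfwd)

end Search

theorem reachable_four_id_disjoint_finRotate :
    reachable 4 4 (code (n := 4) id) &&&
      reachable 4 4 (code fun x : Fin 4 → Bool => x ∘ finRotate 4) = 0 := by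
  decide +kernel

theorem finRotate_four_eq_formPerm : finRotate 4 = (List.finRange 4).formPerm := by
  decide

/-- On four qubits, no list of fewer than nine CNOT gates realizes the cyclic shift
`j ↦ j + 1 (mod 4)`; together with the existence of a nine-gate circuit, the minimal
CNOT cost `C(4)` equals `9`. -/
theorem cycle4_needs_nine_cnot :
    (∀ L : List (Fin 4 × Fin 4), (∀ g ∈ L, g.1 ≠ g.2) → L.length < 9 →
        circuit L ≠ fun x => x ∘ (finRotate 4)) ∧
    sInf {k : ℕ | ∃ L : List (Fin 4 × Fin 4), (∀ g ∈ L, g.1 ≠ g.2) ∧ L.length = k ∧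
        circuit L = fun x => x ∘ (finRotate 4)} = 9 := by
  have lower (L : List (Fin 4 × Fin 4)) (hL : ∀ g ∈ L, g.1 ≠ g.2)
      (hC : circuit L = fun x => x ∘ finRotate 4) : 9 ≤ L.length :=
    add_lt_length_of_reachable_disjoint (k := 4) (l := 4) hL
      (hC ▸ reachable_four_id_disjoint_finRotate)
  have upper : circuit (formPermGates (List.finRange 4)) = fun x => x ∘ finRotate 4 := by
    funext x
    rw [circuit_formPermGates (List.nodup_finRange 4), finRotate_four_eq_formPerm]
  refine ⟨fun L hL hlen hC => (lower L hL hC).not_gt hlen, IsLeast.csInf_eq ⟨?_, ?_⟩⟩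
  · exact ⟨formPermGates (List.finRange 4), by decide, by decide, upper⟩
  · rintro _ ⟨L, hL, rfl, hC⟩
    exact lower L hL hC
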